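/- arXiv:1607.07777 — 4 statements merged into one kernel-verified Lean document; each statement's English description precedes it below -/
import Mathlib

section
/- For every orthonormal basis (e_j) of V and all X, Y ∈ V, ∑_j ⟨ξ_X e_j, ξ_Y e_j⟩ = (1/4)(|θ|²⟨X,Y⟩ − θ(X)θ(Y) − θ(JX)θ(JY)). Consequently ⟨X,Y⟩ + ∑_j ⟨ξ_X e_j, ξ_Y e_j⟩ = g̃(X,Y), where g̃(X,Y) := (1 + |θ|²/4)⟨X,Y⟩ − (1/4)(θ(X)θ(Y) + θ(JX)θ(JY)). -/
open RealInnerProductSpace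

/-!
Write `a ∧ b` for the skew operator `Z ↦ ⟪b, Z⟫ a - ⟪a, Z⟫ b`. Since `J` is orthogonal with
`J² = -1`, it is skew, and the torsion becomes `ξ_X = -(1/4) (X ∧ θ - JX ∧ Jθ)`. The sum over an
orthonormal basis is the Hilbert–Schmidt pairing, for which
`(a ∧ b, c ∧ d) = 2 (⟪a, c⟫ ⟪b, d⟫ - ⟪a, d⟫ ⟪b, c⟫)`. Orthogonality of `J` makes the two diagonal
terms of `(ξ_X, ξ_Y)` equal, and `⟪θ, Jθ⟫ = 0` reduces each of the two cross terms to
`2 θ(JX) θ(JY)`.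
-/

section HilbertSchmidt

open InnerProductSpace

variable {ι 𝕜 E : Type*} [Fintype ι] [RCLike 𝕜] [NormedAddCommGroup E] [InnerProductSpace 𝕜 E]

theorem sum_inner_rankOne_rankOne {F : Type*} [SeminormedAddCommGroup F] [InnerProductSpace 𝕜 F]
    (e : OrthonormalBasis ι 𝕜 E) (a c : F) (b d : E) :
    ∑ j, inner 𝕜 (rankOne 𝕜 a b (e j)) (rankOne 𝕜 c d (e j)) = inner 𝕜 a c * inner 𝕜 d b := by
  simp only [rankOne_apply, inner_smul_left, inner_smul_right, inner_conj_symm]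
  rw [← e.sum_inner_mul_inner d b, Finset.mul_sum]
  exact Finset.sum_congr rfl fun j _ => by ring

end HilbertSchmidt

section Real

open InnerProductSpace

variable {ι V : Type*} [Fintype ι] [NormedAddCommGroup V] [InnerProductSpace ℝ V]

/-- The skew operator `a ∧ b : z ↦ ⟪b, z⟫ a - ⟪a, z⟫ b` attached to a bivector of a real inner
product space. -/
noncomputable def wedgeOp (a b : V) : V →L[ℝ] V :=
  rankOne ℝ a b - rankOne ℝ b a

theorem wedgeOp_apply (a b z : V) : wedgeOp a b z = ⟪b, z⟫ • a - ⟪a, z⟫ • b := by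
  simp only [wedgeOp, sub_apply, rankOne_apply]

theorem sum_inner_wedgeOp_wedgeOp (e : OrthonormalBasis ι ℝ V) (a b c d : V) :
    ∑ j, ⟪wedgeOp a b (e j), wedgeOp c d (e j)⟫ = 2 * (⟪a, c⟫ * ⟪b, d⟫ - ⟪a, d⟫ * ⟪b, c⟫) := by
  simp only [wedgeOp, sub_apply, inner_sub_left, inner_sub_right,
    Finset.sum_sub_distrib, sum_inner_rankOne_rankOne]
  rw [real_inner_comm b d, real_inner_comm a d, real_inner_comm b c, real_inner_comm a c]
  ring

theorem inner_map_left_eq_neg_of_map_map_eq_neg {J : V → V} (hJ2 : ∀ x, J (J x) = -x)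
    (hJo : ∀ x y, ⟪J x, J y⟫ = ⟪x, y⟫) (x y : V) : ⟪J x, y⟫ = -⟪x, J y⟫ := by
  rw [← hJo (J x) y, hJ2, inner_neg_left]

theorem inner_self_map_eq_zero_of_skew {J : V → V} (hJs : ∀ x y, ⟪J x, y⟫ = -⟪x, J y⟫) (x : V) :
    ⟪x, J x⟫ = 0 := by
  have h := hJs x x
  rw [real_inner_comm] at h
  linarith

/-- The `W₄` intrinsic torsion operator `ξ_x` of an orthogonal complex structure `J` with Lee vector
`θ`, encoded through wedge operators; `leeTorsion_apply` recovers the usual formula. -/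
noncomputable def leeTorsion (J : V → V) (θ x : V) : V →L[ℝ] V :=
  -(1 / 4 : ℝ) • (wedgeOp x θ - wedgeOp (J x) (J θ))

theorem leeTorsion_apply {J : V → V} (hJs : ∀ x y, ⟪J x, y⟫ = -⟪x, J y⟫) (θ x y : V) :
    leeTorsion J θ x y =
      -(1 / 4 : ℝ) • (⟪θ, y⟫ • x + ⟪θ, J y⟫ • J x - ⟪x, y⟫ • θ - ⟪x, J y⟫ • J θ) := by
  simp only [leeTorsion, smul_apply, sub_apply,
    wedgeOp_apply, hJs]
  module

theorem sum_inner_leeTorsion_leeTorsion {J : V → V} (hJs : ∀ x y, ⟪J x, y⟫ = -⟪x, J y⟫)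
    (hJo : ∀ x y, ⟪J x, J y⟫ = ⟪x, y⟫) (e : OrthonormalBasis ι ℝ V) (θ x y : V) :
    ∑ j, ⟪leeTorsion J θ x (e j), leeTorsion J θ y (e j)⟫ =
      (1 / 4 : ℝ) * (⟪θ, θ⟫ * ⟪x, y⟫ - ⟪θ, x⟫ * ⟪θ, y⟫ - ⟪θ, J x⟫ * ⟪θ, J y⟫) := by
  have diagonal : ∑ j, ⟪wedgeOp (J x) (J θ) (e j), wedgeOp (J y) (J θ) (e j)⟫ =
      ∑ j, ⟪wedgeOp x θ (e j), wedgeOp y θ (e j)⟫ := by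
    simp only [sum_inner_wedgeOp_wedgeOp, hJo]
  have cross (u v : V) : ∑ j, ⟪wedgeOp u θ (e j), wedgeOp (J v) (J θ) (e j)⟫ =
      2 * (⟪θ, J u⟫ * ⟪θ, J v⟫) := by
    rw [sum_inner_wedgeOp_wedgeOp, inner_self_map_eq_zero_of_skew hJs, ← real_inner_comm θ (J u),
      hJs]
    ring
  have cross' : ∑ j, ⟪wedgeOp (J x) (J θ) (e j), wedgeOp y θ (e j)⟫ =
      2 * (⟪θ, J x⟫ * ⟪θ, J y⟫) := by
    simp only [real_inner_comm (wedgeOp y θ _), cross, mul_comm]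
  simp only [leeTorsion, smul_apply, sub_apply,
    real_inner_smul_left, real_inner_smul_right, inner_sub_left, inner_sub_right,
    ← Finset.mul_sum, Finset.sum_sub_distrib]
  rw [diagonal, cross, cross', sum_inner_wedgeOp_wedgeOp, real_inner_comm θ x]
  ring

end Real

/-- For every orthonormal basis `(e_j)` of `V` and all `X, Y`,
`∑_j ⟨ξ_X e_j, ξ_Y e_j⟩ = (1/4)(|θ|²⟨X,Y⟩ - θ(X)θ(Y) - θ(JX)θ(JY))`, and consequently
`⟨X,Y⟩ + ∑_j ⟨ξ_X e_j, ξ_Y e_j⟩ = g̃(X,Y)` with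
`g̃(X,Y) = (1 + |θ|²/4)⟨X,Y⟩ - (1/4)(θ(X)θ(Y) + θ(JX)θ(JY))`. -/
theorem stmt_5
    {V : Type*} [NormedAddCommGroup V] [InnerProductSpace ℝ V]
    (n : ℕ) (hn : 1 ≤ n) (hdim : Module.finrank ℝ V = 2 * n)
    (J : V →ₗ[ℝ] V) (hJ2 : ∀ X : V, J (J X) = -X)
    (hJo : ∀ X Y : V, ⟪J X, J Y⟫ = ⟪X, Y⟫)
    (θ : V)
    (ξ : V → V → V)
    (hξ : ∀ X Y : V, ξ X Y =
      -(1 / 4 : ℝ) • (⟪θ, Y⟫ • X + ⟪θ, J Y⟫ • J X - ⟪X, Y⟫ • θ - ⟪X, J Y⟫ • J θ))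
    (gt : V → V → ℝ)
    (hgt : ∀ X Y : V, gt X Y =
      (1 + ⟪θ, θ⟫ / 4) * ⟪X, Y⟫ - (1 / 4 : ℝ) * (⟪θ, X⟫ * ⟪θ, Y⟫ + ⟪θ, J X⟫ * ⟪θ, J Y⟫)) :
    ∀ (e : OrthonormalBasis (Fin (2 * n)) ℝ V) (X Y : V),
      (∑ j, ⟪ξ X (e j), ξ Y (e j)⟫) =
        (1 / 4 : ℝ) * (⟪θ, θ⟫ * ⟪X, Y⟫ - ⟪θ, X⟫ * ⟪θ, Y⟫ - ⟪θ, J X⟫ * ⟪θ, J Y⟫) ∧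
      ⟪X, Y⟫ + (∑ j, ⟪ξ X (e j), ξ Y (e j)⟫) = gt X Y := by
  intro e X Y
  have hJs := inner_map_left_eq_neg_of_map_map_eq_neg hJ2 hJo
  have hξ' (X Y : V) : ξ X Y = leeTorsion J θ X Y :=
    (hξ X Y).trans (leeTorsion_apply hJs θ X Y).symm
  have hsum : ∑ j, ⟪ξ X (e j), ξ Y (e j)⟫ =
      (1 / 4 : ℝ) * (⟪θ, θ⟫ * ⟪X, Y⟫ - ⟪θ, X⟫ * ⟪θ, Y⟫ - ⟪θ, J X⟫ * ⟪θ, J Y⟫) := by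
    simp only [hξ', sum_inner_leeTorsion_leeTorsion hJs hJo]
  refine ⟨hsum, ?_⟩
  rw [hsum, hgt]
  ring
end

section
/- The deformed metric g̃ is a warped product with respect to the splitting V = D^⊥ ⊕ D, where D := span{θ, Jθ}: if X is orthogonal to both θ and Jθ, then g̃(X,Y) = (1 + |θ|²/4)⟨X,Y⟩ for all Y ∈ V; and if X ∈ span{θ, Jθ}, then g̃(X,Y) = ⟨X,Y⟩ for all Y ∈ V. -/
open RealInnerProductSpace

/-!
An orthogonal complex structure is skew-adjoint, so `θ(JX) = -⟨Jθ, X⟩` and `θ`, `Jθ` are orthogonal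
of equal length. The form subtracted in `g̃` is therefore
`⟨θ, X⟩⟨θ, Y⟩ + ⟨Jθ, X⟩⟨Jθ, Y⟩`, which vanishes when `X ⊥ θ, Jθ` and, by Parseval's identity,
equals `|θ|²⟨X, Y⟩` when `X ∈ span{θ, Jθ}`.
-/

section Parseval

variable {𝕜 E : Type*} [RCLike 𝕜] [SeminormedAddCommGroup E] [InnerProductSpace 𝕜 E]

theorem sum_inner_mul_inner_of_mem_span {ι : Type*} [Fintype ι] {v : ι → E} {c : 𝕜}
    (orthogonal : Pairwise fun i j ↦ inner 𝕜 (v i) (v j) = 0)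
    (inner_self_eq : ∀ i, inner 𝕜 (v i) (v i) = c)
    {x : E} (hx : x ∈ Submodule.span 𝕜 (Set.range v)) (y : E) :
    ∑ i, inner 𝕜 x (v i) * inner 𝕜 (v i) y = c * inner 𝕜 x y := by
  induction hx using Submodule.span_induction with
  | mem x hx =>
    obtain ⟨j, rfl⟩ := hx
    rw [Fintype.sum_eq_single j fun i hij ↦ by rw [orthogonal hij.symm, zero_mul], inner_self_eq]
  | zero => simp
  | add x₁ x₂ _ _ h₁ h₂ =>
    simp only [inner_add_left, add_mul, Finset.sum_add_distrib, h₁, h₂, mul_add]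
  | smul a x _ h =>
    simp only [inner_smul_left, mul_assoc, ← Finset.mul_sum, h, mul_left_comm c]

theorem inner_mul_inner_add_of_mem_span_pair {u v : E}
    (orthogonal : inner 𝕜 u v = 0) (eq_inner_self : inner 𝕜 v v = inner 𝕜 u u)
    {x : E} (hx : x ∈ Submodule.span 𝕜 {u, v}) (y : E) :
    inner 𝕜 x u * inner 𝕜 u y + inner 𝕜 x v * inner 𝕜 v y = inner 𝕜 u u * inner 𝕜 x y := by
  have pairwise_orthogonal : Pairwise fun i j ↦ inner 𝕜 (![u, v] i) (![u, v] j) = 0 := by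
    intro i j hij
    fin_cases i <;> fin_cases j <;> simp_all [inner_eq_zero_symm]
  simpa [Fin.sum_univ_two] using
    sum_inner_mul_inner_of_mem_span pairwise_orthogonal (c := inner 𝕜 u u)
      (Fin.forall_fin_two.mpr ⟨rfl, eq_inner_self⟩) (by simpa [Set.pair_comm] using hx) y

end Parseval

section ComplexStructure

variable {V : Type*} [SeminormedAddCommGroup V] [InnerProductSpace ℝ V] {J : V → V}

theorem inner_complexStructure_right_eq_neg (hJ2 : ∀ X, J (J X) = -X)
    (hJo : ∀ X Y, ⟪J X, J Y⟫ = ⟪X, Y⟫) (X Y : V) : ⟪X, J Y⟫ = -⟪J X, Y⟫ := by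
  rw [← hJo X (J Y), hJ2, inner_neg_right]

theorem inner_complexStructure_self_eq_zero (hJ2 : ∀ X, J (J X) = -X)
    (hJo : ∀ X Y, ⟪J X, J Y⟫ = ⟪X, Y⟫) (X : V) : ⟪X, J X⟫ = 0 := by
  have skew : ⟪X, J X⟫ = -⟪X, J X⟫ := by
    rw [← real_inner_comm X, ← inner_complexStructure_right_eq_neg hJ2 hJo, real_inner_comm]
  exact self_eq_neg.mp skew

/-- The metric `g̃` obtained by deforming `⟨·,·⟩` along the Lee vector `θ` and its image under the
complex structure `J`. It is encoded as a plain function of two vectors. -/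
noncomputable def deformedMetric (J : V → V) (θ X Y : V) : ℝ :=
  (1 + ⟪θ, θ⟫ / 4) * ⟪X, Y⟫ - (1 / 4 : ℝ) * (⟪θ, X⟫ * ⟪θ, Y⟫ + ⟪θ, J X⟫ * ⟪θ, J Y⟫)

theorem deformedMetric_eq_sub_inner_mul_inner (hJ2 : ∀ X, J (J X) = -X)
    (hJo : ∀ X Y, ⟪J X, J Y⟫ = ⟪X, Y⟫) (θ X Y : V) :
    deformedMetric J θ X Y = (1 + ⟪θ, θ⟫ / 4) * ⟪X, Y⟫ -
      (1 / 4 : ℝ) * (⟪X, θ⟫ * ⟪θ, Y⟫ + ⟪X, J θ⟫ * ⟪J θ, Y⟫) := by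
  simp only [deformedMetric, inner_complexStructure_right_eq_neg hJ2 hJo θ, neg_mul_neg,
    real_inner_comm X]

theorem deformedMetric_of_inner_eq_zero (hJ2 : ∀ X, J (J X) = -X)
    (hJo : ∀ X Y, ⟪J X, J Y⟫ = ⟪X, Y⟫) {θ X : V} (hθ : ⟪θ, X⟫ = 0) (hJθ : ⟪J θ, X⟫ = 0) (Y : V) :
    deformedMetric J θ X Y = (1 + ⟪θ, θ⟫ / 4) * ⟪X, Y⟫ := by
  rw [deformedMetric_eq_sub_inner_mul_inner hJ2 hJo, inner_eq_zero_symm.mp hθ,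
    inner_eq_zero_symm.mp hJθ]
  ring

theorem deformedMetric_of_mem_span (hJ2 : ∀ X, J (J X) = -X)
    (hJo : ∀ X Y, ⟪J X, J Y⟫ = ⟪X, Y⟫) {θ X : V} (hX : X ∈ Submodule.span ℝ {θ, J θ}) (Y : V) :
    deformedMetric J θ X Y = ⟪X, Y⟫ := by
  rw [deformedMetric_eq_sub_inner_mul_inner hJ2 hJo, inner_mul_inner_add_of_mem_span_pair
    (inner_complexStructure_self_eq_zero hJ2 hJo θ) (hJo θ θ) hX]
  ring

theorem stmt_6_general (hJ2 : ∀ X, J (J X) = -X) (hJo : ∀ X Y, ⟪J X, J Y⟫ = ⟪X, Y⟫) (θ : V)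
    (gt : V → V → ℝ)
    (hgt : ∀ X Y : V, gt X Y =
      (1 + ⟪θ, θ⟫ / 4) * ⟪X, Y⟫ - (1 / 4 : ℝ) * (⟪θ, X⟫ * ⟪θ, Y⟫ + ⟪θ, J X⟫ * ⟪θ, J Y⟫)) :
    (∀ X : V, ⟪θ, X⟫ = 0 → ⟪J θ, X⟫ = 0 →
      ∀ Y : V, gt X Y = (1 + ⟪θ, θ⟫ / 4) * ⟪X, Y⟫) ∧
    (∀ X ∈ Submodule.span ℝ ({θ, J θ} : Set V), ∀ Y : V, gt X Y = ⟪X, Y⟫) := by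
  obtain rfl : gt = deformedMetric J θ := funext₂ hgt
  exact ⟨fun _ hθ hJθ ↦ deformedMetric_of_inner_eq_zero hJ2 hJo hθ hJθ,
    fun _ hX ↦ deformedMetric_of_mem_span hJ2 hJo hX⟩

end ComplexStructure

/-- The deformed metric `g̃` is a warped product with respect to the
splitting `V = D^⊥ ⊕ D`, where `D = span{θ, Jθ}`: if `X ⊥ θ` and `X ⊥ Jθ` then
`g̃(X,Y) = (1 + |θ|²/4)⟨X,Y⟩` for all `Y`, and if `X ∈ span{θ, Jθ}` then
`g̃(X,Y) = ⟨X,Y⟩` for all `Y`. -/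
theorem stmt_6
    {V : Type*} [NormedAddCommGroup V] [InnerProductSpace ℝ V]
    (n : ℕ) (hn : 1 ≤ n) (hdim : Module.finrank ℝ V = 2 * n)
    (J : V →ₗ[ℝ] V) (hJ2 : ∀ X : V, J (J X) = -X)
    (hJo : ∀ X Y : V, ⟪J X, J Y⟫ = ⟪X, Y⟫)
    (θ : V)
    (gt : V → V → ℝ)
    (hgt : ∀ X Y : V, gt X Y =
      (1 + ⟪θ, θ⟫ / 4) * ⟪X, Y⟫ - (1 / 4 : ℝ) * (⟪θ, X⟫ * ⟪θ, Y⟫ + ⟪θ, J X⟫ * ⟪θ, J Y⟫)) :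
    (∀ X : V, ⟪θ, X⟫ = 0 → ⟪J θ, X⟫ = 0 →
      ∀ Y : V, gt X Y = (1 + ⟪θ, θ⟫ / 4) * ⟪X, Y⟫) ∧
    (∀ X ∈ Submodule.span ℝ ({θ, J θ} : Set V), ∀ Y : V, gt X Y = ⟪X, Y⟫) := by
  exact stmt_6_general hJ2 hJo θ gt hgt
end

section
/- The bilinear map (X, Y) ↦ ⟨θ, A_{JX'} Y⟩ is symmetric: ⟨θ, A_{JX'} Y⟩ = ⟨θ, A_{JY'} X⟩ for all X, Y ∈ V. -/
open RealInnerProductSpace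

/-!
The function `(U, W) ↦ ⟨θ, A_{JU} W⟩` is the bilinear form
`(1/2)(θ(U)θ(W) + θ(JU)θ(JW) - |θ|²⟨U, W⟩)`. It is symmetric, and it vanishes as soon as one
argument lies in `span {θ, Jθ}`, because `θ` and `Jθ` are orthogonal of the same length. Modulo
this span, `X'` is the multiple `(1 + |θ|²/4)⁻¹ X` of `X`, so replacing `U` by `X'` only rescales
a symmetric form.
-/

section

variable {V : Type*} [SeminormedAddCommGroup V] [InnerProductSpace ℝ V]

/-- An orthogonal complex structure on a real inner product space: a linear map that squares to
`-id` and preserves the inner product. -/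
structure IsOrthogonalComplexStructure (J : V →ₗ[ℝ] V) : Prop where
  apply_apply (X : V) : J (J X) = -X
  inner_map_map (X Y : V) : ⟪J X, J Y⟫ = ⟪X, Y⟫

namespace IsOrthogonalComplexStructure

variable {J : V →ₗ[ℝ] V}

theorem inner_map_left (hJ : IsOrthogonalComplexStructure J) (X Y : V) :
    ⟪J X, Y⟫ = -⟪X, J Y⟫ := by
  rw [← hJ.inner_map_map X (J Y), hJ.apply_apply, inner_neg_right, neg_neg]

theorem inner_self_map (hJ : IsOrthogonalComplexStructure J) (X : V) : ⟪X, J X⟫ = 0 := by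
  have skew := hJ.inner_map_left X X
  rw [real_inner_comm] at skew
  linarith

end IsOrthogonalComplexStructure

/-- The tensor `A_X Y`, the pointwise value of `(∇_X J) Y` on a locally conformally Kähler
manifold with complex structure `J` and Lee vector `θ`. -/
noncomputable def lckCovDeriv (J : V →ₗ[ℝ] V) (θ X Y : V) : V :=
  (1 / 2 : ℝ) • (⟪θ, J Y⟫ • X - ⟪θ, Y⟫ • J X - ⟪X, J Y⟫ • θ + ⟪X, Y⟫ • J θ)

/-- The vector `X'` attached to `X` by the Lee vector `θ`. -/
noncomputable def leeTransform (J : V →ₗ[ℝ] V) (θ X : V) : V :=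
  (1 + ⟪θ, θ⟫ / 4)⁻¹ • (X + (1 / 4 : ℝ) • (⟪θ, X⟫ • θ + ⟪θ, J X⟫ • J θ))

theorem leeTransform_sub_smul_mem_span (J : V →ₗ[ℝ] V) (θ X : V) :
    leeTransform J θ X - (1 + ⟪θ, θ⟫ / 4)⁻¹ • X ∈ Submodule.span ℝ {θ, J θ} := by
  rw [leeTransform, smul_add, add_sub_cancel_left, smul_smul]
  exact Submodule.smul_mem _ _ (Submodule.mem_span_pair.2 ⟨_, _, rfl⟩)

/-- The bilinear form `(1/2)(θ ⊗ θ + (θ ∘ J) ⊗ (θ ∘ J) - |θ|²⟨·,·⟩)`. For an orthogonal complex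
structure `J` it is `-|θ|²/2` times the inner product of the components orthogonal to `θ` and
`Jθ`. -/
noncomputable def leeTransverseForm (J : V →ₗ[ℝ] V) (θ : V) : LinearMap.BilinForm ℝ V :=
  (1 / 2 : ℝ) • ((innerₗ V θ).smulRight (innerₗ V θ) +
    (innerₗ V θ ∘ₗ J).smulRight (innerₗ V θ ∘ₗ J) - ⟪θ, θ⟫ • innerₗ V)

theorem leeTransverseForm_apply (J : V →ₗ[ℝ] V) (θ U W : V) :
    leeTransverseForm J θ U W =
      1 / 2 * (⟪θ, U⟫ * ⟪θ, W⟫ + ⟪θ, J U⟫ * ⟪θ, J W⟫ - ⟪θ, θ⟫ * ⟪U, W⟫) :=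
  rfl

theorem leeTransverseForm_comm (J : V →ₗ[ℝ] V) (θ U W : V) :
    leeTransverseForm J θ U W = leeTransverseForm J θ W U := by
  rw [leeTransverseForm_apply, leeTransverseForm_apply, real_inner_comm U W]
  ring

namespace IsOrthogonalComplexStructure

variable {J : V →ₗ[ℝ] V}

theorem inner_lckCovDeriv_map (hJ : IsOrthogonalComplexStructure J) (θ U W : V) :
    ⟪θ, lckCovDeriv J θ (J U) W⟫ = leeTransverseForm J θ U W := by
  simp only [lckCovDeriv, leeTransverseForm_apply, inner_add_right, inner_sub_right,
    real_inner_smul_right, inner_neg_right, hJ.apply_apply, hJ.inner_map_map, hJ.inner_self_map]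
  ring

theorem span_le_ker_leeTransverseForm (hJ : IsOrthogonalComplexStructure J) (θ : V) :
    Submodule.span ℝ {θ, J θ} ≤ LinearMap.ker (leeTransverseForm J θ) := by
  rw [Submodule.span_le, Set.pair_subset_iff]
  constructor <;> refine LinearMap.ext fun W ↦ ?_
  · simp [leeTransverseForm_apply, hJ.inner_self_map]
  · simp [leeTransverseForm_apply, hJ.inner_self_map, hJ.apply_apply, hJ.inner_map_left]

theorem leeTransverseForm_eq_smul (hJ : IsOrthogonalComplexStructure J) {θ U X : V} {c : ℝ}
    (hU : U - c • X ∈ Submodule.span ℝ {θ, J θ}) :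
    leeTransverseForm J θ U = c • leeTransverseForm J θ X := by
  rw [← map_smul, ← sub_eq_zero, ← map_sub]
  exact hJ.span_le_ker_leeTransverseForm θ hU

end IsOrthogonalComplexStructure

theorem stmt_9_general {J : V →ₗ[ℝ] V} (hJ : IsOrthogonalComplexStructure J) {θ : V}
    {c : ℝ} {p : V → V} (hp : ∀ X, p X - c • X ∈ Submodule.span ℝ {θ, J θ}) (X Y : V) :
    ⟪θ, lckCovDeriv J θ (J (p X)) Y⟫ = ⟪θ, lckCovDeriv J θ (J (p Y)) X⟫ := by
  rw [hJ.inner_lckCovDeriv_map, hJ.inner_lckCovDeriv_map, hJ.leeTransverseForm_eq_smul (hp X),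
    hJ.leeTransverseForm_eq_smul (hp Y), LinearMap.smul_apply, LinearMap.smul_apply,
    leeTransverseForm_comm]

end

/-- The bilinear map `(X, Y) ↦ ⟨θ, A_{JX'} Y⟩` is symmetric:
`⟨θ, A_{JX'} Y⟩ = ⟨θ, A_{JY'} X⟩` for all `X, Y`, where
`A_X Y = (1/2)(θ(JY)X - θ(Y)JX - ⟨X,JY⟩θ + ⟨X,Y⟩Jθ)` and
`X' = (1 + |θ|²/4)⁻¹ (X + (1/4)(θ(X)θ + θ(JX)Jθ))`. -/
theorem stmt_9
    {V : Type*} [NormedAddCommGroup V] [InnerProductSpace ℝ V]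
    (n : ℕ) (hn : 1 ≤ n) (hdim : Module.finrank ℝ V = 2 * n)
    (J : V →ₗ[ℝ] V) (hJ2 : ∀ X : V, J (J X) = -X)
    (hJo : ∀ X Y : V, ⟪J X, J Y⟫ = ⟪X, Y⟫)
    (θ : V)
    (p : V → V)
    (hp : ∀ X : V, p X =
      (1 + ⟪θ, θ⟫ / 4)⁻¹ • (X + (1 / 4 : ℝ) • (⟪θ, X⟫ • θ + ⟪θ, J X⟫ • J θ)))
    (A : V → V → V)
    (hA : ∀ X Y : V, A X Y =
      (1 / 2 : ℝ) • (⟪θ, J Y⟫ • X - ⟪θ, Y⟫ • J X - ⟪X, J Y⟫ • θ + ⟪X, Y⟫ • J θ)) :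
    ∀ X Y : V, ⟪θ, A (J (p X)) Y⟫ = ⟪θ, A (J (p Y)) X⟫ := by
  obtain rfl : p = leeTransform J θ := funext hp
  obtain rfl : A = lckCovDeriv J θ := funext₂ hA
  exact stmt_9_general ⟨hJ2, hJo⟩ (leeTransform_sub_smul_mem_span J θ)
end

section
/- Let dα ∈ V be a vector and r : V → ℝ a linear functional (playing the roles of the gradient of α and of Ric(ζ, ·)). Then the minimality equation 0 = η(Z)⟨dα, Y'⟩ − η(Y)⟨dα, Z'⟩ + (2α²/(1+2α²))(η(Y)·r(Z) − η(Z)·r(Y)) holds for all Y, Z ∈ V if and only if ⟨dα, Y⟩ = 2α²·r(Y) for every Y ∈ V with η(Y) = 0. (This is the algebraic content of the theorem that an α-Kenmotsu manifold is minimal as a U(n)×1-structure iff Yα = 2α² Ric(ζ, Y) for Y orthogonal to ζ.) -/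
open RealInnerProductSpace

/-!
Write `η = ⟪ζ, ·⟫`, `φ = ⟪dα, ·⟫` and `t = 2α²`. In `η(Z) φ(Y') - η(Y) φ(Z')` the `ζ`-components of
`Y'` and `Z'` contribute equal terms, which cancel. Up to the nonzero factor
`1 / (1 + t)`, the minimality equation therefore says that the exterior product of `η` and `φ - t r`
vanishes, and for `η ≠ 0` this means that `φ - t r` vanishes on the hyperplane `η = 0`.
-/

theorem ker_le_ker_iff_forall_smul_apply_comm {R M N : Type*} [CommRing R] [IsDomain R]
    [AddCommGroup M] [Module R M] [AddCommGroup N] [Module R N] [Module.IsTorsionFree R N]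
    {η : M →ₗ[R] R} (hη : η ≠ 0) (ψ : M →ₗ[R] N) :
    LinearMap.ker η ≤ LinearMap.ker ψ ↔ ∀ x y, η y • ψ x = η x • ψ y := by
  constructor
  · intro hker x y
    have hmem : η y • x - η x • y ∈ LinearMap.ker η := by
      simp [mul_comm]
    simpa [sub_eq_zero] using hker hmem
  · intro hcomm x hx
    obtain ⟨z, hz⟩ := DFunLike.ne_iff.mp hη
    have hzx : η z • ψ x = 0 := by
      rw [hcomm, LinearMap.mem_ker.mp hx, zero_smul]
    exact (smul_eq_zero.mp hzx).resolve_left hz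

theorem mul_apply_smul_add_smul_sub_swap {R M : Type*} [CommRing R] [AddCommGroup M] [Module R M]
    (η φ : M →ₗ[R] R) (a b : R) (v x y : M) :
    η y * φ (a • x + (b * η x) • v) - η x * φ (a • y + (b * η y) • v) =
      a * (η y * φ x - η x * φ y) := by
  simp only [map_add, map_smul, smul_eq_mul]
  ring

theorem stmt_19_general {K V : Type*} [Field K] [AddCommGroup V] [Module K V]
    {η : V →ₗ[K] K} (hη : η ≠ 0) (ζ : V) {t : K} (ht : 1 + t ≠ 0) (φ r : V →ₗ[K] K)
    (p : V → V) (hp : ∀ X, p X = (1 / (1 + t)) • X + (t / (1 + t) * η X) • ζ) :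
    (∀ Y Z, 0 = η Z * φ (p Y) - η Y * φ (p Z) + t / (1 + t) * (η Y * r Z - η Z * r Y)) ↔
      ∀ Y, η Y = 0 → φ Y = t * r Y := by
  let ψ : V →ₗ[K] K := φ - t • r
  have hψ (X : V) : ψ X = φ X - t * r X := rfl
  have minimality_expr_eq (Y Z : V) :
      η Z * φ (p Y) - η Y * φ (p Z) + t / (1 + t) * (η Y * r Z - η Z * r Y) =
        1 / (1 + t) * (η Z * ψ Y - η Y * ψ Z) := by
    rw [hp, hp, mul_apply_smul_add_smul_sub_swap, hψ, hψ]
    ring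
  calc
    _ ↔ ∀ Y Z, η Z • ψ Y = η Y • ψ Z := by
      simp only [minimality_expr_eq, zero_eq_mul, one_div_ne_zero ht, false_or, sub_eq_zero,
        smul_eq_mul]
    _ ↔ LinearMap.ker η ≤ LinearMap.ker ψ := (ker_le_ker_iff_forall_smul_apply_comm hη ψ).symm
    _ ↔ _ := by simp only [SetLike.le_def, LinearMap.mem_ker, hψ, sub_eq_zero]

/-- For a vector `dα ∈ V` and a linear functional `r : V → ℝ` (playing
the roles of the gradient of `α` and of `Ric(ζ, ·)`), the minimality equation
`0 = η(Z)⟨dα, Y'⟩ - η(Y)⟨dα, Z'⟩ + (2α²/(1+2α²))(η(Y)r(Z) - η(Z)r(Y))` holds for all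
`Y, Z` iff `⟨dα, Y⟩ = 2α²·r(Y)` for every `Y` with `η(Y) = 0`. This is the algebraic
content of: an α-Kenmotsu manifold is minimal as a `U(n)×1`-structure iff
`Yα = 2α² Ric(ζ, Y)` for `Y` orthogonal to `ζ`. -/
theorem stmt_19
    {V : Type*} [NormedAddCommGroup V] [InnerProductSpace ℝ V]
    (n : ℕ) (hn : 1 ≤ n) (hdim : Module.finrank ℝ V = 2 * n + 1)
    (ζ : V) (hζ : ‖ζ‖ = 1)
    (α : ℝ) (dα : V) (r : V →ₗ[ℝ] ℝ)
    (p : V → V)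
    (hp : ∀ X : V, p X =
      (1 / (1 + 2 * α ^ 2)) • X + ((2 * α ^ 2 / (1 + 2 * α ^ 2)) * ⟪ζ, X⟫) • ζ) :
    (∀ Y Z : V,
      0 = ⟪ζ, Z⟫ * ⟪dα, p Y⟫ - ⟪ζ, Y⟫ * ⟪dα, p Z⟫ +
        (2 * α ^ 2 / (1 + 2 * α ^ 2)) * (⟪ζ, Y⟫ * r Z - ⟪ζ, Z⟫ * r Y)) ↔
    (∀ Y : V, ⟪ζ, Y⟫ = 0 → ⟪dα, Y⟫ = 2 * α ^ 2 * r Y) := by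
  have hη : innerₗ V ζ ≠ 0 := fun h => by simpa [hζ] using LinearMap.congr_fun h ζ
  exact stmt_19_general hη ζ (by positivity) (innerₗ V dα) r p hp
end
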